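/- Let χ : ℝ → ℂ be a smooth function supported in [−1/4, 1/4]. There is a constant C_χ such that for all integers J ≥ 1 and d ≥ 1, all distinct rationals r_1, …, r_J ∈ [0,1) sharing a common denominator D < 2^d, and every f ∈ ℓ²(ℤ), one has ‖ sup_{n > 2d} | Σ_{j=1}^{J} ∫₀¹ χ(2^n(θ − r_j)) f̂(θ) e(xθ) dθ | ‖_{ℓ²(ℤ, dx)} ≤ C_χ ‖f‖_{ℓ²(ℤ)}; the constant C_χ is independent of J, D, d and the choice of the rational points. -/

import Mathlib

open scoped ENNReal

noncomputable section

/-- `e(t) = e^{2πit}`. -/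
def e2pi (t : ℝ) : ℂ := Complex.exp (2 * Real.pi * Complex.I * t)

section Auxiliary

open MeasureTheory FourierTransform ComplexConjugate


/-- The Poisson-type kernel `t / (t² + w²)`. -/
def poissonKer (t w : ℝ) : ℝ := t / (t ^ 2 + w ^ 2)

lemma poissonKer_nonneg {t : ℝ} (ht : 0 ≤ t) (w : ℝ) : 0 ≤ poissonKer t w := by
  unfold poissonKer; positivity

lemma poissonKer_neg (t w : ℝ) : poissonKer t (-w) = poissonKer t w := by
  simp [poissonKer]

lemma poissonKer_mul_le_of_le {s t : ℝ} (hs : 0 < s) (hst : s ≤ t) (a b : ℝ) :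
    poissonKer s a * poissonKer t b ≤
      2 * poissonKer t (a + b) * (poissonKer s a + poissonKer t b) := by
  have ht : 0 < t := hs.trans_le hst
  unfold poissonKer
  have h1 : 0 < s ^ 2 + a ^ 2 := by positivity
  have h2 : 0 < t ^ 2 + b ^ 2 := by positivity
  have h3 : 0 < t ^ 2 + (a + b) ^ 2 := by positivity
  have key : s * (t ^ 2 + (a + b) ^ 2) ≤ 2 * (s * (t ^ 2 + b ^ 2) + t * (s ^ 2 + a ^ 2)) := by
    nlinarith [mul_nonneg hs.le (sq_nonneg (a - b)), mul_nonneg (sub_nonneg.2 hst) (sq_nonneg a),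
      mul_nonneg hs.le (sq_nonneg t), mul_nonneg ht.le (sq_nonneg s)]
  have e1 : s / (s ^ 2 + a ^ 2) * (t / (t ^ 2 + b ^ 2)) =
      t * (s * (t ^ 2 + (a + b) ^ 2)) /
        ((s ^ 2 + a ^ 2) * (t ^ 2 + b ^ 2) * (t ^ 2 + (a + b) ^ 2)) := by
    field_simp
  have e2 : 2 * (t / (t ^ 2 + (a + b) ^ 2)) * (s / (s ^ 2 + a ^ 2) + t / (t ^ 2 + b ^ 2)) =
      t * (2 * (s * (t ^ 2 + b ^ 2) + t * (s ^ 2 + a ^ 2))) /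
        ((s ^ 2 + a ^ 2) * (t ^ 2 + b ^ 2) * (t ^ 2 + (a + b) ^ 2)) := by
    field_simp
  rw [e1, e2]
  gcongr

lemma poissonKer_mul_le {s t : ℝ} (hs : 0 < s) (ht : 0 < t) (a b : ℝ) :
    poissonKer s a * poissonKer t b ≤
      2 * (poissonKer s (a + b) + poissonKer t (a + b)) * (poissonKer s a + poissonKer t b) := by
  have n1 := poissonKer_nonneg hs.le a
  have n2 := poissonKer_nonneg ht.le b
  have n3 := poissonKer_nonneg hs.le (a + b)
  have n4 := poissonKer_nonneg ht.le (a + b)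
  rcases le_total s t with h | h
  · have := poissonKer_mul_le_of_le hs h a b
    nlinarith [mul_nonneg n3 (add_nonneg n1 n2)]
  · have := poissonKer_mul_le_of_le ht h b a
    rw [add_comm b a] at this
    nlinarith [mul_nonneg n4 (add_nonneg n1 n2)]

lemma sum_range_poissonKer_le {t : ℝ} (ht : 1 ≤ t) (N : ℕ) :
    ∑ i ∈ Finset.range N, poissonKer t i ≤ 4 := by
  have h : ∑ i ∈ Finset.range N, poissonKer t i ≤
      2 * t * (1 / (t - 1 / 2) - 1 / (t + N - 1 / 2)) := by
    induction N with
    | zero => simp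
    | succ k ih =>
      rw [Finset.sum_range_succ]
      have hk : (0 : ℝ) ≤ k := k.cast_nonneg
      have : poissonKer t k ≤ 2 * t * (1 / (t + k - 1 / 2) - 1 / (t + (k + 1 : ℕ) - 1 / 2)) := by
        have p1 : 0 < t + k - 1 / 2 := by linarith
        have p2 : 0 < t + (k + 1 : ℕ) - 1 / 2 := by push_cast; linarith
        rw [div_sub_div _ _ p1.ne' p2.ne', poissonKer, mul_div_assoc',
          div_le_div_iff₀ (by positivity) (by positivity)]
        push_cast
        have : (0:ℝ) < t := by linarith
        have h0 : (t + k - 1 / 2) * (t + (k + 1) - 1 / 2) ≤ 2 * (t ^ 2 + (k:ℝ) ^ 2) := by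
          nlinarith [sq_nonneg (t - k)]
        calc t * ((t + k - 1 / 2) * (t + (k + 1) - 1 / 2)) ≤ t * (2 * (t ^ 2 + (k:ℝ) ^ 2)) := by
              gcongr
          _ = _ := by ring
      linarith
  refine h.trans ?_
  have p1 : 0 < t - 1 / 2 := by linarith
  have hN : (0 : ℝ) ≤ N := N.cast_nonneg
  have p2 : 0 ≤ 1 / (t + N - 1 / 2) := by
    apply one_div_nonneg.2; linarith
  have : 2 * t * (1 / (t - 1 / 2)) ≤ 4 := by
    rw [mul_one_div, div_le_iff₀ p1]; linarith
  nlinarith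

lemma sum_poissonKer_le {t : ℝ} (ht : 1 ≤ t) (Z : Finset ℤ) :
    ∑ z ∈ Z, poissonKer t z ≤ 8 := by
  have aux : ∀ W : Finset ℤ, Set.InjOn Int.natAbs W → ∑ z ∈ W, poissonKer t z ≤ 4 := by
    intro W hW
    have e : ∑ z ∈ W, poissonKer t z = ∑ i ∈ W.image Int.natAbs, poissonKer t i := by
      rw [Finset.sum_image hW]
      refine Finset.sum_congr rfl fun z _ => ?_
      simp [poissonKer, Nat.cast_natAbs]
    rw [e]
    obtain ⟨N, hN⟩ := (W.image Int.natAbs).exists_nat_subset_range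
    exact (Finset.sum_le_sum_of_subset_of_nonneg hN fun i _ _ =>
      poissonKer_nonneg (by linarith) _).trans (sum_range_poissonKer_le ht N)
  rw [← Finset.sum_filter_add_sum_filter_not Z (fun z => 0 ≤ z)]
  have h1 := aux (Z.filter fun z => 0 ≤ z) (by
    intro a ha b hb hab; simp at ha hb hab; omega)
  have h2 := aux (Z.filter fun z => ¬ 0 ≤ z) (by
    intro a ha b hb hab; simp at ha hb hab; omega)
  linarith

/-- A residue class modulo `D` contributes a factor `1 / D` to the mass of the kernel. -/
lemma sum_poissonKer_residue_le {D : ℕ} (hD : 1 ≤ D) {t : ℝ} (ht : D ≤ t) (x : ℤ) (Z : Finset ℤ)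
    (hZ : ∀ z ∈ Z, (D : ℤ) ∣ x - z) :
    ∑ z ∈ Z, poissonKer t ((x : ℝ) - z) ≤ 8 / D := by
  have hD0 : (0 : ℝ) < D := by exact_mod_cast hD
  have hDz : (D : ℤ) ≠ 0 := by positivity
  have inj : Set.InjOn (fun z => (x - z) / (D : ℤ)) Z := by
    intro a ha b hb hab
    obtain ⟨k, hk⟩ := hZ a ha
    obtain ⟨l, hl⟩ := hZ b hb
    simp only [hk, hl, Int.mul_ediv_cancel_left _ hDz] at hab
    subst hab; omega
  have e : ∑ z ∈ Z, poissonKer t ((x : ℝ) - z) =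
      (∑ k ∈ Z.image (fun z => (x - z) / (D : ℤ)), poissonKer (t / D) k) / D := by
    rw [Finset.sum_image inj, Finset.sum_div]
    refine Finset.sum_congr rfl fun z hz => ?_
    obtain ⟨k, hk⟩ := hZ z hz
    have : (x : ℝ) - z = D * k := by exact_mod_cast hk
    rw [this, hk, Int.mul_ediv_cancel_left _ hDz]
    unfold poissonKer
    field_simp
  rw [e]
  gcongr
  exact sum_poissonKer_le ((one_le_div hD0).2 ht) _

/-- A linearised maximal inequality for the kernels `poissonKer`, by the `T T*` method. -/
lemma sum_sum_mul_poissonKer_le (X : Finset ℤ) (t h : ℤ → ℝ) {S : ℝ}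
    (ht : ∀ x ∈ X, 0 < t x) (hh : ∀ x, 0 ≤ h x)
    (hS : ∀ x ∈ X, ∑ z ∈ X, poissonKer (t x) ((x : ℝ) - z) ≤ S) :
    ∑ x ∈ X, ∑ y ∈ X, h x * h y * poissonKer (t x) ((x : ℝ) - y) ≤
      8 * S * ∑ x ∈ X, h x ^ 2 := by
  set P := ∑ x ∈ X, ∑ y ∈ X, h x * h y * poissonKer (t x) ((x : ℝ) - y) with hP
  have hkn : ∀ x ∈ X, ∀ w, 0 ≤ poissonKer (t x) w := fun x hx w => poissonKer_nonneg (ht x hx).le w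
  have hsym : ∑ x ∈ X, ∑ y ∈ X, h x * h y * poissonKer (t y) ((x : ℝ) - y) = P := by
    rw [hP, Finset.sum_comm]
    refine Finset.sum_congr rfl fun x _ => Finset.sum_congr rfl fun y _ => ?_
    rw [← poissonKer_neg, neg_sub]; ring
  set v : ℤ → ℝ := fun z => ∑ x ∈ X, h x * poissonKer (t x) ((x : ℝ) - z) with hv
  have hPv : P = ∑ y ∈ X, h y * v y := by
    rw [hP, Finset.sum_comm]
    refine Finset.sum_congr rfl fun y _ => ?_
    rw [hv, Finset.mul_sum]
    exact Finset.sum_congr rfl fun x _ => by ring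
  have hQ : ∑ z ∈ X, v z ^ 2 ≤ 8 * S * P := by
    have e : ∑ z ∈ X, v z ^ 2 = ∑ x ∈ X, ∑ y ∈ X, h x * h y *
        ∑ z ∈ X, poissonKer (t x) ((x : ℝ) - z) * poissonKer (t y) ((z : ℝ) - y) := by
      simp_rw [sq, hv, Finset.sum_mul_sum, Finset.mul_sum]
      rw [Finset.sum_comm]
      refine Finset.sum_congr rfl fun x _ => ?_
      rw [Finset.sum_comm]
      refine Finset.sum_congr rfl fun y _ => Finset.sum_congr rfl fun z _ => ?_
      rw [← poissonKer_neg (t y) ((z : ℝ) - y), neg_sub]; ring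
    have e2 : 8 * S * P = ∑ x ∈ X, ∑ y ∈ X, h x * h y *
        (4 * S * (poissonKer (t x) ((x : ℝ) - y) + poissonKer (t y) ((x : ℝ) - y))) := by
      have : 8 * S * P = 4 * S * P + 4 * S * P := by ring
      rw [this]
      nth_rewrite 2 [← hsym]
      rw [hP]
      simp_rw [Finset.mul_sum]
      rw [← Finset.sum_add_distrib]
      refine Finset.sum_congr rfl fun x _ => ?_
      rw [← Finset.sum_add_distrib]
      refine Finset.sum_congr rfl fun y _ => ?_
      ring
    rw [e, e2]
    refine Finset.sum_le_sum fun x hx => Finset.sum_le_sum fun y hy => ?_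
    refine mul_le_mul_of_nonneg_left ?_ (mul_nonneg (hh x) (hh y))
    have hb : ∀ z ∈ X, poissonKer (t x) ((x : ℝ) - z) * poissonKer (t y) ((z : ℝ) - y) ≤
        2 * (poissonKer (t x) ((x : ℝ) - y) + poissonKer (t y) ((x : ℝ) - y)) *
          (poissonKer (t x) ((x : ℝ) - z) + poissonKer (t y) ((y : ℝ) - z)) := by
      intro z _
      have := poissonKer_mul_le (ht x hx) (ht y hy) ((x : ℝ) - z) ((z : ℝ) - y)
      rw [sub_add_sub_cancel] at this
      rwa [← poissonKer_neg (t y) ((y : ℝ) - z), neg_sub]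
    refine (Finset.sum_le_sum hb).trans ?_
    rw [← Finset.mul_sum, Finset.sum_add_distrib]
    have hn : 0 ≤ 2 * (poissonKer (t x) ((x : ℝ) - y) + poissonKer (t y) ((x : ℝ) - y)) :=
      mul_nonneg zero_le_two (add_nonneg (hkn x hx _) (hkn y hy _))
    refine (mul_le_mul_of_nonneg_left (add_le_add (hS x hx) (hS y hy)) hn).trans_eq ?_
    ring
  have hCS : P ^ 2 ≤ (∑ x ∈ X, h x ^ 2) * ∑ z ∈ X, v z ^ 2 := by
    rw [hPv]; exact Finset.sum_mul_sq_le_sq_mul_sq _ _ _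
  have hP0 : 0 ≤ P := Finset.sum_nonneg fun x hx => Finset.sum_nonneg fun y _ =>
    mul_nonneg (mul_nonneg (hh x) (hh y)) (hkn x hx _)
  have hH : 0 ≤ ∑ x ∈ X, h x ^ 2 := Finset.sum_nonneg fun x _ => sq_nonneg _
  rcases hP0.eq_or_lt with h0 | h0
  · rw [← h0]
    rcases X.eq_empty_or_nonempty with rfl | ⟨x, hx⟩
    · simp
    · have : 0 ≤ S := (Finset.sum_nonneg fun z _ => hkn x hx _).trans (hS x hx)
      positivity
  · have : P * P ≤ (8 * S * ∑ x ∈ X, h x ^ 2) * P := by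
      nlinarith [mul_le_mul_of_nonneg_left hQ hH]
    exact le_of_mul_le_mul_right this h0

/-- A supremum can be taken out of a finite sum by choosing the index separately in each term. -/
lemma sum_iSup_le_of_forall_selection {α ι : Type*} [Nonempty ι] (X : Finset α)
    (a : α → ι → ℝ≥0∞) {B : ℝ≥0∞} (h : ∀ s : α → ι, ∑ x ∈ X, a x (s x) ≤ B) :
    ∑ x ∈ X, ⨆ i, a x i ≤ B := by
  classical
  have key : ∀ c : ℝ≥0∞, (∀ s : α → ι, c + ∑ x ∈ X, a x (s x) ≤ B) →
      c + ∑ x ∈ X, ⨆ i, a x i ≤ B := by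
    clear h
    induction X using Finset.induction_on with
    | empty => intro c h; simpa using h fun _ => Classical.arbitrary ι
    | insert x X hx ih =>
      intro c h
      rw [Finset.sum_insert hx, ← add_assoc, add_right_comm, ENNReal.add_iSup]
      refine iSup_le fun i => ?_
      rw [add_right_comm]
      refine ih _ fun s => ?_
      have := h (Function.update s x i)
      rw [Finset.sum_insert hx, Function.update_self] at this
      rw [add_assoc]
      refine le_trans (le_of_eq ?_) this
      congr 2
      refine Finset.sum_congr rfl fun y hy => ?_
      rw [Function.update_of_ne (by rintro rfl; exact hx hy)]
  simpa using key 0 (by simpa using h)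

lemma e2pi_add (s t : ℝ) : e2pi (s + t) = e2pi s * e2pi t := by
  simp [e2pi, ← Complex.exp_add, mul_add]

lemma norm_e2pi (t : ℝ) : ‖e2pi t‖ = 1 := by
  rw [e2pi, show (2 * Real.pi * Complex.I * t : ℂ) = ((2 * Real.pi * t : ℝ) : ℂ) * Complex.I by
    push_cast; ring, Complex.norm_exp_ofReal_mul_I]

lemma conj_e2pi (t : ℝ) : conj (e2pi t) = e2pi (-t) := by
  simp [e2pi, ← Complex.exp_conj, map_ofNat]

lemma e2pi_zero : e2pi 0 = 1 := by simp [e2pi]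

lemma e2pi_intCast (n : ℤ) : e2pi n = 1 := by
  rw [e2pi, ← Complex.exp_int_mul_two_pi_mul_I n]
  congr 1; push_cast; ring

lemma e2pi_nat_mul (n : ℕ) (t : ℝ) : e2pi (n * t) = e2pi t ^ n := by
  rw [e2pi, e2pi, ← Complex.exp_nat_mul]
  congr 1; push_cast; ring

@[fun_prop]
lemma continuous_e2pi : Continuous e2pi := by
  unfold e2pi; fun_prop

lemma e2pi_eq_one_iff {t : ℝ} : e2pi t = 1 ↔ ∃ n : ℤ, t = n := by
  rw [e2pi, Complex.exp_eq_one_iff]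
  have h : (2 * Real.pi * Complex.I : ℂ) ≠ 0 := Complex.two_pi_I_ne_zero
  refine exists_congr fun n => ?_
  rw [mul_comm (n : ℂ), mul_right_inj' h]
  norm_cast

lemma integral_mul_e2pi_eq_fourier (g : ℝ → ℂ) (s : ℝ) :
    ∫ x, g x * e2pi (s * x) = 𝓕 g (-s) := by
  rw [Real.fourier_real_eq_integral_exp_smul]
  refine integral_congr_ae (.of_forall fun x => ?_)
  simp only [e2pi, smul_eq_mul]
  rw [mul_comm]
  congr 2
  push_cast; ring

lemma deriv_eq_zero_of_support_subset_Icc {g : ℝ → ℂ} {a b : ℝ}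
    (hg : ∀ x, x ∉ Set.Icc a b → g x = 0) : ∀ x, x ∉ Set.Icc a b → deriv g x = 0 := by
  intro x hx
  by_contra h
  have h1 : tsupport g ⊆ Set.Icc a b :=
    closure_minimal (fun y hy => by by_contra h; exact hy (hg y h)) isClosed_Icc
  exact hx (h1 (support_deriv_subset h))

lemma exists_bound_of_eq_zero_off_Icc {g : ℝ → ℂ} {a b : ℝ} (hc : Continuous g)
    (hg : ∀ x, x ∉ Set.Icc a b → g x = 0) : ∃ M, 0 ≤ M ∧ ∀ x, ‖g x‖ ≤ M := by
  obtain ⟨M, hM⟩ := (isCompact_Icc (a := a) (b := b)).exists_bound_of_continuousOn hc.continuousOn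
  refine ⟨max M 0, le_max_right _ _, fun x => ?_⟩
  by_cases hx : x ∈ Set.Icc a b
  · exact (hM x hx).trans (le_max_left _ _)
  · rw [hg x hx, norm_zero]; exact le_max_right _ _

lemma norm_fourier_le_of_eq_zero_off_Icc {g : ℝ → ℂ} {a b M : ℝ} (hab : a ≤ b)
    (hg : ∀ x, x ∉ Set.Icc a b → g x = 0) (hM : ∀ x, ‖g x‖ ≤ M) (s : ℝ) :
    ‖𝓕 g s‖ ≤ M * (b - a) := by
  rw [← neg_neg s, ← integral_mul_e2pi_eq_fourier,
    ← setIntegral_eq_integral_of_forall_compl_eq_zero (s := Set.Icc a b)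
      (fun x hx => by rw [hg x hx, zero_mul])]
  refine (norm_setIntegral_le_of_norm_le_const (C := M) (by simp) ?_).trans_eq ?_
  · intro x _
    rw [norm_mul, norm_e2pi, mul_one]; exact hM x
  · simp [hab]

lemma integrable_of_eq_zero_off_Icc {g : ℝ → ℂ} {a b : ℝ} (hc : Continuous g)
    (hg : ∀ x, x ∉ Set.Icc a b → g x = 0) : Integrable g :=
  hc.integrable_of_hasCompactSupport (HasCompactSupport.intro isCompact_Icc hg)

lemma exists_fourier_decay {χ : ℝ → ℂ} (hχs : ContDiff ℝ (⊤ : ℕ∞) χ)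
    (hχ0 : ∀ x : ℝ, x ∉ Set.Icc (-(1/4) : ℝ) (1/4) → χ x = 0) :
    ∃ A : ℝ, 0 < A ∧ ∀ ε : ℝ, 0 ≤ ε → ε ≤ 1 → ∀ s : ℝ,
      ‖∫ x, χ (ε * x) * conj (χ x) * e2pi (s * x)‖ ≤ A / (1 + s ^ 2) := by
  set c : ℝ → ℂ := fun x => conj (χ x) with hc
  have hcs : ContDiff ℝ (⊤ : ℕ∞) c := Complex.conjCLE.contDiff.comp hχs
  have hc0 : ∀ x : ℝ, x ∉ Set.Icc (-(1/4) : ℝ) (1/4) → c x = 0 := fun x hx => by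
    simp [hc, hχ0 x hx]
  have hs1 : ∀ {g : ℝ → ℂ}, ContDiff ℝ (⊤ : ℕ∞) g → ContDiff ℝ (⊤ : ℕ∞) (deriv g) :=
    fun h => (contDiff_infty_iff_deriv.1 h).2
  have hdf : ∀ {g : ℝ → ℂ}, ContDiff ℝ (⊤ : ℕ∞) g → ∀ x, HasDerivAt g (deriv g x) x :=
    fun h x => ((h.differentiable (by simp)) x).hasDerivAt
  obtain ⟨M₀, hM₀, hb0⟩ := exists_bound_of_eq_zero_off_Icc hχs.continuous hχ0
  have hχ1 := deriv_eq_zero_of_support_subset_Icc hχ0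
  have hχ2 := deriv_eq_zero_of_support_subset_Icc hχ1
  have hc1 := deriv_eq_zero_of_support_subset_Icc hc0
  have hc2 := deriv_eq_zero_of_support_subset_Icc hc1
  obtain ⟨M₁, hM₁, hb1⟩ := exists_bound_of_eq_zero_off_Icc (hs1 hχs).continuous hχ1
  obtain ⟨M₂, hM₂, hb2⟩ := exists_bound_of_eq_zero_off_Icc (hs1 (hs1 hχs)).continuous hχ2
  obtain ⟨N₀, hN₀, hd0⟩ := exists_bound_of_eq_zero_off_Icc hcs.continuous hc0
  obtain ⟨N₁, hN₁, hd1⟩ := exists_bound_of_eq_zero_off_Icc (hs1 hcs).continuous hc1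
  obtain ⟨N₂, hN₂, hd2⟩ := exists_bound_of_eq_zero_off_Icc (hs1 (hs1 hcs)).continuous hc2
  set A₀ := M₀ * N₀
  set A₂ := M₂ * N₀ + M₁ * N₁ + (M₁ * N₁ + M₀ * N₂)
  refine ⟨A₀ + A₂ + 1, by positivity, fun ε hε0 hε1 s => ?_⟩
  have hlin : ∀ x : ℝ, HasDerivAt (fun x : ℝ => ε * x) ε x := fun x => by
    simpa using (hasDerivAt_id x).const_mul ε
  have hcomp : ∀ {g : ℝ → ℂ}, ContDiff ℝ (⊤ : ℕ∞) g → ∀ x,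
      HasDerivAt (fun x => g (ε * x)) (ε * deriv g (ε * x)) x := fun h x => by
    simpa [Function.comp_def] using! (hdf h (ε * x)).scomp x (hlin x)
  set g : ℝ → ℂ := fun x => χ (ε * x) * c x with hg
  set g1 : ℝ → ℂ := fun x => ε * deriv χ (ε * x) * c x + χ (ε * x) * deriv c x with hg1
  set g2 : ℝ → ℂ := fun x =>
    ε * (ε * deriv (deriv χ) (ε * x)) * c x + ε * deriv χ (ε * x) * deriv c x +
      (ε * deriv χ (ε * x) * deriv c x + χ (ε * x) * deriv (deriv c) x) with hg2
  have D0 : ∀ x, HasDerivAt g (g1 x) x := fun x => (hcomp hχs x).mul (hdf hcs x)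
  have D1 : ∀ x, HasDerivAt g1 (g2 x) x := fun x =>
    (((hcomp (hs1 hχs) x).const_mul (ε : ℂ)).mul (hdf hcs x)).add
      ((hcomp hχs x).mul (hdf (hs1 hcs) x))
  have k0 := hχs.continuous
  have k1 := (hs1 hχs).continuous
  have k2 := (hs1 (hs1 hχs)).continuous
  have l0 := hcs.continuous
  have l1 := (hs1 hcs).continuous
  have l2 := (hs1 (hs1 hcs)).continuous
  have cg : Continuous g := by fun_prop
  have cg1 : Continuous g1 := by fun_prop
  have cg2 : Continuous g2 := by fun_prop
  have z0 : ∀ x, x ∉ Set.Icc (-(1/4) : ℝ) (1/4) → g x = 0 := fun x hx => by simp [hg, hc0 x hx]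
  have z1 : ∀ x, x ∉ Set.Icc (-(1/4) : ℝ) (1/4) → g1 x = 0 := fun x hx => by
    simp [hg1, hc0 x hx, hc1 x hx]
  have z2 : ∀ x, x ∉ Set.Icc (-(1/4) : ℝ) (1/4) → g2 x = 0 := fun x hx => by
    simp [hg2, hc0 x hx, hc1 x hx, hc2 x hx]
  have e0 : deriv g = g1 := funext fun x => (D0 x).deriv
  have e1 : deriv g1 = g2 := funext fun x => (D1 x).deriv
  have f1 := Real.fourier_deriv (integrable_of_eq_zero_off_Icc cg z0)
    (fun x => (D0 x).differentiableAt) (by rw [e0]; exact integrable_of_eq_zero_off_Icc cg1 z1)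
  have f2 := Real.fourier_deriv (integrable_of_eq_zero_off_Icc cg1 z1)
    (fun x => (D1 x).differentiableAt) (by rw [e1]; exact integrable_of_eq_zero_off_Icc cg2 z2)
  rw [e0] at f1
  rw [e1, f1] at f2
  have n0 := norm_fourier_le_of_eq_zero_off_Icc (by norm_num) z0 (M := A₀) (fun x => by
    rw [hg, norm_mul]; exact mul_le_mul (hb0 _) (hd0 _) (norm_nonneg _) hM₀) (-s)
  have hεn : ‖(ε : ℂ)‖ ≤ 1 := by simpa [abs_of_nonneg hε0] using hε1
  have n2 := norm_fourier_le_of_eq_zero_off_Icc (by norm_num) z2 (M := A₂) (fun x => by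
    have hε : ∀ {z : ℂ} {M : ℝ}, ‖z‖ ≤ M → ‖(ε : ℂ) * z‖ ≤ M := fun {z M} h => by
      rw [norm_mul]
      exact (mul_le_of_le_one_left (norm_nonneg _) hεn).trans h
    have hm : ∀ {z w : ℂ} {M N : ℝ}, 0 ≤ M → ‖z‖ ≤ M → ‖w‖ ≤ N → ‖z * w‖ ≤ M * N :=
      fun h0 h1 h2 => by
        rw [norm_mul]; exact mul_le_mul h1 h2 (norm_nonneg _) h0
    exact norm_add_le_of_le
      (norm_add_le_of_le (hm hM₂ (hε (hε (hb2 _))) (hd0 _)) (hm hM₁ (hε (hb1 _)) (hd1 _)))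
      (norm_add_le_of_le (hm hM₁ (hε (hb1 _)) (hd1 _)) (hm hM₀ (hb0 _) (hd2 _)))) (-s)
  have hI : ∫ x, χ (ε * x) * conj (χ x) * e2pi (s * x) = 𝓕 g (-s) :=
    integral_mul_e2pi_eq_fourier g s
  rw [hI, le_div_iff₀ (by positivity)]
  rw [f2] at n2
  simp only [smul_eq_mul, norm_mul, Complex.norm_real, Complex.norm_I, Complex.norm_ofNat,
    Real.norm_eq_abs, abs_neg, abs_of_pos Real.pi_pos, mul_one] at n2
  have hpi := Real.pi_gt_three
  have hs2 : s ^ 2 = |s| * |s| := by rw [← sq, sq_abs]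
  have hA₀ : 0 ≤ A₀ := by positivity
  have hA₂ : 0 ≤ A₂ := by positivity
  have : s ^ 2 * ‖𝓕 g (-s)‖ ≤ 2 * Real.pi * |s| * (2 * Real.pi * |s| * ‖𝓕 g (-s)‖) := by
    rw [hs2]
    have : 0 ≤ |s| * |s| * ‖𝓕 g (-s)‖ := by positivity
    nlinarith [mul_nonneg this (show 0 ≤ 4 * (Real.pi * Real.pi) - 1 by nlinarith)]
  nlinarith

/-- The bumps `χ (2ⁿ ·)` and `χ (2ᵐ ·)` have a frequency correlation controlled by `poissonKer`. -/
lemma exists_correlation_bound {χ : ℝ → ℂ} (hχs : ContDiff ℝ (⊤ : ℕ∞) χ)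
    (hχ0 : ∀ x : ℝ, x ∉ Set.Icc (-(1/4) : ℝ) (1/4) → χ x = 0) :
    ∃ A : ℝ, 0 < A ∧ ∀ s t : ℝ, 0 < s → 0 < t → ∀ w : ℝ,
      ‖∫ x, χ (s * x) * conj (χ (t * x)) * e2pi (w * x)‖ ≤
        A * (poissonKer s w + poissonKer t w) := by
  obtain ⟨A, hA, h⟩ := exists_fourier_decay hχs hχ0
  have key : ∀ s t : ℝ, 0 < s → s ≤ t → ∀ w : ℝ,
      ‖∫ x, χ (s * x) * conj (χ (t * x)) * e2pi (w * x)‖ ≤ A * poissonKer t w := by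
    intro s t hs hst w
    have ht := hs.trans_le hst
    have e : ∫ x, χ (s * x) * conj (χ (t * x)) * e2pi (w * x) =
        (t⁻¹ : ℝ) • ∫ x, χ (s / t * x) * conj (χ x) * e2pi (w / t * x) := by
      have := Measure.integral_comp_mul_left
        (fun x => χ (s / t * x) * conj (χ x) * e2pi (w / t * x)) t
      rw [abs_of_pos (inv_pos.2 ht)] at this
      rw [← this]
      refine integral_congr_ae (.of_forall fun x => ?_)
      have h1 : s / t * (t * x) = s * x := by field_simp
      have h2 : w / t * (t * x) = w * x := by field_simp
      simp only [h1, h2]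
    rw [e, norm_smul, Real.norm_of_nonneg (inv_pos.2 ht).le]
    refine (mul_le_mul_of_nonneg_left (h (s / t) (by positivity) ((div_le_one ht).2 hst) _)
      (inv_pos.2 ht).le).trans_eq ?_
    unfold poissonKer
    field_simp
  refine ⟨A, hA, fun s t hs ht w => ?_⟩
  rcases le_total s t with hst | hst
  · refine (key s t hs hst w).trans ?_
    nlinarith [mul_nonneg hA.le (poissonKer_nonneg hs.le w)]
  · have : ∫ x, χ (s * x) * conj (χ (t * x)) * e2pi (w * x) =
        conj (∫ x, χ (t * x) * conj (χ (s * x)) * e2pi ((-w) * x)) := by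
      rw [← integral_conj]
      refine integral_congr_ae (.of_forall fun x => ?_)
      simp only [map_mul, conj_e2pi, Complex.conj_conj, neg_mul, neg_neg]
      ring
    rw [this, RCLike.norm_conj]
    refine (key t s ht hst (-w)).trans ?_
    rw [poissonKer_neg]
    nlinarith [mul_nonneg hA.le (poissonKer_nonneg ht.le w)]

/-- A Bessel-type inequality from a quadratic bound on the Gram matrix. -/
lemma sum_norm_inner_sq_le {α E : Type*} [NormedAddCommGroup E] [InnerProductSpace ℂ E]
    (X : Finset α) (v : α → E) {B : ℝ} (hB : 0 ≤ B)
    (h : ∀ a : α → ℝ, (∀ x, 0 ≤ a x) →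
      ∑ x ∈ X, ∑ y ∈ X, a x * a y * ‖inner ℂ (v x) (v y)‖ ≤ B * ∑ x ∈ X, a x ^ 2) (g : E) :
    ∑ x ∈ X, ‖inner ℂ (v x) g‖ ^ 2 ≤ B * ‖g‖ ^ 2 := by
  set T := ∑ x ∈ X, ‖inner ℂ (v x) g‖ ^ 2 with hT
  set w := ∑ x ∈ X, inner ℂ (v x) g • v x with hw
  have h1 : inner ℂ w g = (T : ℂ) := by
    rw [hw, sum_inner, hT]
    push_cast
    refine Finset.sum_congr rfl fun x _ => ?_
    rw [inner_smul_left, ← Complex.conj_mul']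
  have h2 : ‖w‖ ^ 2 ≤ B * T := by
    have e : ((‖w‖ ^ 2 : ℝ) : ℂ) = ∑ x ∈ X, ∑ y ∈ X,
        conj (inner ℂ (v x) g) * (inner ℂ (v y) g * inner ℂ (v x) (v y)) := by
      push_cast
      rw [show (‖w‖ : ℂ) ^ 2 = inner ℂ w w from (inner_self_eq_norm_sq_to_K (𝕜 := ℂ) w).symm]
      nth_rewrite 1 [hw]
      rw [sum_inner]
      refine Finset.sum_congr rfl fun x _ => ?_
      rw [inner_smul_left, hw, inner_sum, Finset.mul_sum]
      refine Finset.sum_congr rfl fun y _ => ?_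
      rw [inner_smul_right]
    have : ‖w‖ ^ 2 = ‖((‖w‖ ^ 2 : ℝ) : ℂ)‖ := by
      rw [Complex.norm_real, Real.norm_of_nonneg (sq_nonneg _)]
    rw [this, e]
    refine le_trans ?_ (h (fun x => ‖inner ℂ (v x) g‖) fun _ => norm_nonneg _)
    refine norm_sum_le_of_le _ fun x _ => norm_sum_le_of_le _ fun y _ => ?_
    rw [norm_mul, norm_mul, RCLike.norm_conj, mul_assoc]
  have hT0 : 0 ≤ T := Finset.sum_nonneg fun _ _ => sq_nonneg _
  have h3 : T ≤ ‖w‖ * ‖g‖ := by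
    have := norm_inner_le_norm (𝕜 := ℂ) w g
    rwa [h1, Complex.norm_real, Real.norm_of_nonneg hT0] at this
  rcases hT0.eq_or_lt with h0 | h0
  · rw [← h0]; positivity
  · have : T * T ≤ (B * ‖g‖ ^ 2) * T := by
      have : T * T ≤ (‖w‖ * ‖g‖) * (‖w‖ * ‖g‖) := mul_self_le_mul_self hT0 h3
      nlinarith [mul_le_mul_of_nonneg_right h2 (sq_nonneg ‖g‖)]
    exact le_of_mul_le_mul_right this h0

/-- Orthogonality of the characters `u ↦ e(u m / D)` for distinct residues `m < D`. -/
lemma sum_norm_sq_sum_e2pi {J D : ℕ} (num : Fin J → ℕ) (hinj : Function.Injective num)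
    (hnum : ∀ j, num j < D) (c : Fin J → ℂ) :
    ∑ u ∈ Finset.range D, ‖∑ j, e2pi (u * (num j / D : ℝ)) * c j‖ ^ 2 =
      D * ∑ j, ‖c j‖ ^ 2 := by
  have horth : ∀ i j, ∑ u ∈ Finset.range D,
      e2pi (u * ((num i / D : ℝ) - num j / D)) = if i = j then (D : ℂ) else 0 := by
    intro i j
    have hD : (D : ℝ) ≠ 0 := by
      have := hnum i
      have : D ≠ 0 := by omega
      exact_mod_cast this
    simp_rw [e2pi_nat_mul]
    split_ifs with hij
    · simp [hij, e2pi_zero]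
    · have hne : e2pi ((num i / D : ℝ) - num j / D) ≠ 1 := by
        rw [Ne, e2pi_eq_one_iff]
        rintro ⟨n, hn⟩
        have h1 : (num i : ℝ) - num j = n * D := by
          field_simp at hn; linarith
        have h2 : (num i : ℤ) - num j = n * D := by exact_mod_cast h1
        have hi := hnum i
        have hj := hnum j
        have : (num i : ℤ) - num j = 0 := by
          apply Int.eq_zero_of_abs_lt_dvd (m := (D : ℤ)) ⟨n, by rw [h2, mul_comm]⟩
          rw [abs_lt]; omega
        exact hij (hinj (by omega))
      have hz : e2pi ((num i / D : ℝ) - num j / D) ^ D = 1 := by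
        rw [← e2pi_nat_mul]
        have : (D : ℝ) * ((num i / D : ℝ) - num j / D) = ((num i - num j : ℤ) : ℝ) := by
          push_cast; field_simp
        rw [this, e2pi_intCast]
      rw [geom_sum_eq hne, hz]; simp
  apply Complex.ofReal_injective
  push_cast
  have e : ∀ u : ℕ, ((‖∑ j, e2pi (u * (num j / D : ℝ)) * c j‖ : ℝ) : ℂ) ^ 2 =
      ∑ i, ∑ j, conj (c j) * c i * e2pi (u * ((num i / D : ℝ) - num j / D)) := by
    intro u
    rw [← Complex.mul_conj', map_sum, Finset.sum_mul_sum]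
    refine Finset.sum_congr rfl fun i _ => Finset.sum_congr rfl fun j _ => ?_
    rw [map_mul, conj_e2pi, mul_sub, sub_eq_add_neg, e2pi_add]
    ring
  simp_rw [e]
  rw [Finset.sum_comm, Finset.mul_sum]
  refine Finset.sum_congr rfl fun i _ => ?_
  rw [Finset.sum_comm]
  simp_rw [← Finset.mul_sum, horth]
  simp [← Complex.conj_mul']
  ring

lemma sum_norm_integral_sq_le_of_residue {χ : ℝ → ℂ} (hχ : Continuous χ)
    (hχ0 : ∀ x : ℝ, x ∉ Set.Icc (-(1/4) : ℝ) (1/4) → χ x = 0) {A : ℝ} (hA0 : 0 < A)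
    (hA : ∀ s t : ℝ, 0 < s → 0 < t → ∀ w : ℝ,
      ‖∫ x, χ (s * x) * conj (χ (t * x)) * e2pi (w * x)‖ ≤
        A * (poissonKer s w + poissonKer t w))
    {D : ℕ} (hD : 1 ≤ D) (X : Finset ℤ) (hX : ∀ x ∈ X, ∀ y ∈ X, (D : ℤ) ∣ x - y)
    (t : ℤ → ℝ) (ht : ∀ x, (D : ℝ) ≤ t x) {G : ℝ → ℂ} (hG : MemLp G 2 volume) :
    ∑ x ∈ X, ‖∫ θ, χ (t x * θ) * e2pi (x * θ) * G θ‖ ^ 2 ≤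
      128 * A / D * ∫ θ, ‖G θ‖ ^ 2 := by
  have hD0 : (0 : ℝ) < D := by exact_mod_cast hD
  have ht0 : ∀ x, 0 < t x := fun x => hD0.trans_le (ht x)
  have hmem : ∀ x : ℤ, MemLp (fun θ => conj (χ (t x * θ) * e2pi (x * θ))) 2 volume := by
    intro x
    refine Continuous.memLp_of_hasCompactSupport (by fun_prop) ?_
    refine HasCompactSupport.intro (isCompact_Icc (a := -(1/4) / t x) (b := (1/4) / t x)) ?_
    intro θ hθ
    rw [hχ0, zero_mul, map_zero]
    contrapose! hθ
    rw [Set.mem_Icc] at hθ ⊢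
    rw [div_le_iff₀ (ht0 x), le_div_iff₀ (ht0 x)]
    constructor <;> linarith [hθ.1, hθ.2]
  set v : ℤ → Lp ℂ 2 (volume : Measure ℝ) := fun x => (hmem x).toLp _ with hv
  have hvG : ∀ x, inner ℂ (v x) (hG.toLp G) = ∫ θ, χ (t x * θ) * e2pi (x * θ) * G θ := by
    intro x
    rw [L2.inner_def]
    refine integral_congr_ae ?_
    filter_upwards [(hmem x).coeFn_toLp, hG.coeFn_toLp] with θ h1 h2
    rw [hv]
    simp only [h1, h2, RCLike.inner_apply, Complex.conj_conj]
    ring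
  have hvv : ∀ x y, inner ℂ (v x) (v y) =
      ∫ θ, χ (t x * θ) * conj (χ (t y * θ)) * e2pi (((x : ℝ) - y) * θ) := by
    intro x y
    rw [L2.inner_def]
    refine integral_congr_ae ?_
    filter_upwards [(hmem x).coeFn_toLp, (hmem y).coeFn_toLp] with θ h1 h2
    rw [hv]
    simp only [h1, h2, RCLike.inner_apply, Complex.conj_conj]
    rw [map_mul, conj_e2pi, sub_mul, sub_eq_add_neg, e2pi_add]
    ring
  have hGG : ‖hG.toLp G‖ ^ 2 = ∫ θ, ‖G θ‖ ^ 2 := by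
    have h1 := inner_self_eq_norm_sq_to_K (𝕜 := ℂ) (hG.toLp G)
    rw [L2.inner_def] at h1
    have h2 : ∫ θ, inner ℂ ((hG.toLp G : ℝ → ℂ) θ) ((hG.toLp G : ℝ → ℂ) θ) =
        ((∫ θ, ‖G θ‖ ^ 2 : ℝ) : ℂ) := by
      rw [← integral_complex_ofReal]
      refine integral_congr_ae ?_
      filter_upwards [hG.coeFn_toLp] with θ h2
      rw [h2, inner_self_eq_norm_sq_to_K]
      push_cast
      rfl
    rw [h2] at h1
    apply Complex.ofReal_injective
    rw [h1]
    push_cast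
    rfl
  simp_rw [← hvG, ← hGG]
  refine sum_norm_inner_sq_le X v (by positivity) (fun a ha => ?_) _
  set P := ∑ x ∈ X, ∑ y ∈ X, a x * a y * poissonKer (t x) ((x : ℝ) - y) with hP
  have hP' : ∑ x ∈ X, ∑ y ∈ X, a x * a y * poissonKer (t y) ((x : ℝ) - y) = P := by
    rw [hP, Finset.sum_comm]
    refine Finset.sum_congr rfl fun x _ => Finset.sum_congr rfl fun y _ => ?_
    rw [← poissonKer_neg, neg_sub]; ring
  have hPle : P ≤ 8 * (8 / D) * ∑ x ∈ X, a x ^ 2 :=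
    sum_sum_mul_poissonKer_le X t a (fun x _ => ht0 x) ha fun x hx =>
      sum_poissonKer_residue_le hD (ht x) x X (hX x hx)
  calc ∑ x ∈ X, ∑ y ∈ X, a x * a y * ‖inner ℂ (v x) (v y)‖
      ≤ ∑ x ∈ X, ∑ y ∈ X, a x * a y *
        (A * (poissonKer (t x) ((x : ℝ) - y) + poissonKer (t y) ((x : ℝ) - y))) := by
        refine Finset.sum_le_sum fun x _ => Finset.sum_le_sum fun y _ => ?_
        rw [hvv]
        exact mul_le_mul_of_nonneg_left (hA _ _ (ht0 x) (ht0 y) _) (mul_nonneg (ha x) (ha y))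
    _ = A * (P + ∑ x ∈ X, ∑ y ∈ X, a x * a y * poissonKer (t y) ((x : ℝ) - y)) := by
        rw [hP, ← Finset.sum_add_distrib, Finset.mul_sum]
        refine Finset.sum_congr rfl fun x _ => ?_
        rw [← Finset.sum_add_distrib, Finset.mul_sum]
        exact Finset.sum_congr rfl fun y _ => by ring
    _ = 2 * A * P := by rw [hP']; ring
    _ ≤ 2 * A * (8 * (8 / D) * ∑ x ∈ X, a x ^ 2) := by gcongr
    _ = 128 * A / D * ∑ x ∈ X, a x ^ 2 := by ring

/-- Integrals over the pairwise disjoint arcs of radius `1 / (4 D)` around the points `num j / D`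
add up to at most the full integral. -/
lemma sum_integral_indicator_le {J D : ℕ} (hD : 1 ≤ D) (num : Fin J → ℕ)
    (hinj : Function.Injective num) {g : ℝ → ℝ} (hg : Integrable g) (hg0 : ∀ x, 0 ≤ g x) :
    ∑ j, ∫ θ, (Set.Icc (-(1 / (4 * D)) : ℝ) (1 / (4 * D))).indicator
      (fun θ => g (θ + num j / D)) θ ≤ ∫ θ, g θ := by
  have hD0 : (0 : ℝ) < D := by exact_mod_cast hD
  set ρ : ℝ := 1 / (4 * D) with hρ
  set I : Fin J → Set ℝ := fun j => Set.Icc (num j / D - ρ) (num j / D + ρ) with hI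
  have e : ∀ j, ∫ θ, (Set.Icc (-ρ) ρ).indicator (fun θ => g (θ + num j / D)) θ =
      ∫ θ in I j, g θ := by
    intro j
    rw [← integral_indicator measurableSet_Icc,
      ← integral_add_right_eq_self ((I j).indicator g) (num j / D : ℝ)]
    refine integral_congr_ae (.of_forall fun θ => ?_)
    simp only [Set.indicator, hI, Set.mem_Icc]
    refine if_congr ?_ rfl rfl
    constructor <;> rintro ⟨h1, h2⟩ <;> constructor <;> linarith
  simp_rw [e]
  have hdisj : Pairwise (Function.onFun Disjoint I) := by
    intro i j hij
    rw [Function.onFun, Set.disjoint_left]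
    intro θ hi hj
    simp only [hI, Set.mem_Icc] at hi hj
    have h1 : |(num i : ℝ) / D - num j / D| ≤ 2 * ρ := by
      rw [abs_le]; constructor <;> linarith [hi.1, hi.2, hj.1, hj.2]
    rw [← sub_div, abs_div, abs_of_pos hD0, div_le_iff₀ hD0, hρ] at h1
    have h2 : 2 * (1 / (4 * (D : ℝ))) * D = 1 / 2 := by field_simp; norm_num
    rw [h2] at h1
    have h3 : (num i : ℤ) - num j ≠ 0 := by
      intro h; exact hij (hinj (by omega))
    have h4 : (1 : ℝ) ≤ |(num i : ℝ) - num j| := by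
      exact_mod_cast Int.one_le_abs h3
    linarith
  rw [← integral_iUnion_fintype (fun j => measurableSet_Icc) hdisj (fun j => hg.integrableOn)]
  exact setIntegral_le_integral hg (.of_forall hg0)

lemma sum_norm_multifrequency_sq_le {χ : ℝ → ℂ} (hχ : Continuous χ)
    (hχ0 : ∀ x : ℝ, x ∉ Set.Icc (-(1/4) : ℝ) (1/4) → χ x = 0) {A : ℝ} (hA0 : 0 < A)
    (hA : ∀ s t : ℝ, 0 < s → 0 < t → ∀ w : ℝ,
      ‖∫ x, χ (s * x) * conj (χ (t * x)) * e2pi (w * x)‖ ≤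
        A * (poissonKer s w + poissonKer t w))
    {J D : ℕ} (hD : 1 ≤ D) (num : Fin J → ℕ) (hinj : Function.Injective num)
    (hnum : ∀ j, num j < D) (X : Finset ℤ)
    (t : ℤ → ℝ) (ht : ∀ x, (D : ℝ) ≤ t x) {F : ℝ → ℂ} (hF : MemLp F 2 volume) :
    ∑ x ∈ X, ‖∑ j, ∫ θ, χ (t x * (θ - num j / D)) * F θ * e2pi (x * θ)‖ ^ 2 ≤
      128 * A * ∫ θ, ‖F θ‖ ^ 2 := by
  have hD0 : (0 : ℝ) < D := by exact_mod_cast hD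
  have hDz : (0 : ℤ) < D := by exact_mod_cast hD
  have ht0 : ∀ x, 0 < t x := fun x => hD0.trans_le (ht x)
  set ρ : ℝ := 1 / (4 * D) with hρ
  have hFj : ∀ j, MemLp (fun θ => F (θ + num j / D)) 2 volume := fun j =>
    hF.comp_measurePreserving (measurePreserving_add_right volume (num j / D : ℝ))
  set G : ℕ → ℝ → ℂ := fun u => (Set.Icc (-ρ) ρ).indicator
    (fun θ => ∑ j, e2pi (u * (num j / D : ℝ)) * F (θ + num j / D)) with hG
  have hGm : ∀ u, MemLp (G u) 2 volume := fun u =>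
    (memLp_finsetSum _ fun j _ => (hFj j).const_mul _).indicator measurableSet_Icc
  set res : ℤ → ℕ := fun x => (x % D).toNat with hres
  have hresz : ∀ x, (res x : ℤ) = x % D := fun x =>
    Int.toNat_of_nonneg (Int.emod_nonneg _ hDz.ne')
  have hchar : ∀ (x : ℤ) j, e2pi (x * (num j / D : ℝ)) = e2pi (res x * (num j / D : ℝ)) := by
    intro x j
    have h1 : (x : ℝ) = res x + D * ((x / D : ℤ) : ℝ) := by
      have : x = (res x : ℤ) + D * (x / D) := by rw [hresz, Int.emod_add_mul_ediv]
      exact_mod_cast this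
    have h2 : (x : ℝ) * (num j / D : ℝ) =
        res x * (num j / D : ℝ) + ((x / D * num j : ℤ) : ℝ) := by
      nth_rewrite 1 [h1]; push_cast; field_simp
    rw [h2, e2pi_add, e2pi_intCast, mul_one]
  have hsupp : ∀ x θ, θ ∉ Set.Icc (-ρ) ρ → χ (t x * θ) = 0 := by
    intro x θ hθ
    apply hχ0
    contrapose! hθ
    have h1 : |t x * θ| ≤ 1 / 4 := abs_le.2 hθ
    rw [abs_mul, abs_of_pos (ht0 x)] at h1
    refine abs_le.1 ?_
    rw [hρ, le_div_iff₀ (by positivity)]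
    nlinarith [mul_le_mul_of_nonneg_right (ht x) (abs_nonneg θ)]
  have hφ : ∀ x : ℤ, MemLp (fun θ => χ (t x * θ) * e2pi (x * θ)) 2 volume := fun x =>
    Continuous.memLp_of_hasCompactSupport (by fun_prop)
      (HasCompactSupport.intro isCompact_Icc fun θ hθ => by rw [hsupp x θ hθ, zero_mul])
  have hS : ∀ x : ℤ, ∑ j, ∫ θ, χ (t x * (θ - num j / D)) * F θ * e2pi (x * θ) =
      ∫ θ, χ (t x * θ) * e2pi (x * θ) * G (res x) θ := by
    intro x
    have e : ∀ j, ∫ θ, χ (t x * (θ - num j / D)) * F θ * e2pi (x * θ) =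
        ∫ θ, χ (t x * θ) * e2pi (x * θ) * (e2pi (res x * (num j / D : ℝ)) *
          F (θ + num j / D)) := by
      intro j
      rw [← integral_add_right_eq_self _ (num j / D : ℝ)]
      refine integral_congr_ae (.of_forall fun θ => ?_)
      simp only [add_sub_cancel_right, mul_add, e2pi_add, hchar]
      ring
    simp_rw [e]
    rw [← integral_finsetSum]
    · refine integral_congr_ae (.of_forall fun θ => ?_)
      simp only [← Finset.mul_sum, hG]
      by_cases hθ : θ ∈ Set.Icc (-ρ) ρ
      · rw [Set.indicator_of_mem hθ]
      · rw [hsupp x θ hθ]; simp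
    · intro j _
      exact (hφ x).integrable_mul ((hFj j).const_mul _)
  simp_rw [hS]
  have hmaps : ∀ x ∈ X, res x ∈ Finset.range D := by
    intro x _
    rw [Finset.mem_range]
    have := Int.emod_lt_of_pos x hDz
    have := hresz x
    omega
  rw [← Finset.sum_fiberwise_of_maps_to hmaps]
  have hclass : ∀ u ∈ Finset.range D,
      ∑ x ∈ X with res x = u, ‖∫ θ, χ (t x * θ) * e2pi (x * θ) * G (res x) θ‖ ^ 2 ≤
        128 * A / D * ∫ θ, ‖G u θ‖ ^ 2 := by
    intro u _
    refine le_trans (le_of_eq ?_) (sum_norm_integral_sq_le_of_residue hχ hχ0 hA0 hA hD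
      (X.filter fun x => res x = u) ?_ t ht (hGm u))
    · refine Finset.sum_congr rfl fun x hx => ?_
      rw [(Finset.mem_filter.1 hx).2]
    · intro x hx y hy
      have h1 := hresz x
      have h2 := hresz y
      rw [(Finset.mem_filter.1 hx).2] at h1
      rw [(Finset.mem_filter.1 hy).2] at h2
      exact Int.dvd_of_emod_eq_zero (by rw [Int.sub_emod, ← h1, ← h2]; simp)
  refine (Finset.sum_le_sum hclass).trans ?_
  rw [← Finset.mul_sum, ← integral_finsetSum _ fun u _ => (hGm u).integrable_norm_pow two_ne_zero]
  have hpt : ∀ θ, ∑ u ∈ Finset.range D, ‖G u θ‖ ^ 2 =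
      ∑ j, D * (Set.Icc (-ρ) ρ).indicator (fun θ => ‖F (θ + num j / D)‖ ^ 2) θ := by
    intro θ
    by_cases hθ : θ ∈ Set.Icc (-ρ) ρ
    · simp only [hG, Set.indicator_of_mem hθ]
      rw [sum_norm_sq_sum_e2pi num hinj hnum, Finset.mul_sum]
    · simp [hG, Set.indicator_of_notMem hθ]
  simp_rw [hpt]
  have hint : ∀ j, Integrable
      ((Set.Icc (-ρ) ρ).indicator (fun θ => ‖F (θ + num j / D)‖ ^ 2)) := fun j =>
    ((hFj j).integrable_norm_pow two_ne_zero).indicator measurableSet_Icc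
  rw [integral_finsetSum _ fun j _ => (hint j).const_mul _]
  simp_rw [integral_const_mul]
  rw [← Finset.mul_sum, ← mul_assoc, div_mul_cancel₀ _ hD0.ne']
  gcongr
  exact sum_integral_indicator_le hD num hinj (g := fun θ => ‖F θ‖ ^ 2)
    (hF.integrable_norm_pow two_ne_zero) fun _ => sq_nonneg _

lemma continuous_tsum_mul_e2pi {f : ℤ → ℂ} (hf : Summable fun k => ‖f k‖) :
    Continuous fun θ : ℝ => ∑' k : ℤ, f k * e2pi (-((k : ℝ) * θ)) :=
  continuous_tsum (fun k => by fun_prop) hf fun k θ => by rw [norm_mul, norm_e2pi, mul_one]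

lemma setIntegral_e2pi_intCast (m : ℤ) :
    ∫ θ in Set.Ioc (0 : ℝ) 1, e2pi (m * θ) = if m = 0 then 1 else 0 := by
  split_ifs with h
  · simp [h, e2pi_zero]
  · rw [← intervalIntegral.integral_of_le zero_le_one]
    have hc : (2 * Real.pi * Complex.I * m : ℂ) ≠ 0 :=
      mul_ne_zero Complex.two_pi_I_ne_zero (by exact_mod_cast h)
    have := integral_exp_mul_complex (a := 0) (b := 1) hc
    have e : ∀ θ : ℝ, e2pi (m * θ) = Complex.exp (2 * Real.pi * Complex.I * m * θ) := fun θ => by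
      rw [e2pi]; push_cast; ring_nf
    simp_rw [e, this]
    have h1 := e2pi_intCast m
    rw [e2pi] at h1
    push_cast at h1
    simp [h1]

/-- Termwise integration of an absolutely convergent Fourier series against a bounded function. -/
lemma hasSum_setIntegral_mul_e2pi {f : ℤ → ℂ} (hf : Summable fun k => ‖f k‖) {g : ℝ → ℂ}
    (hg : Continuous g) {M : ℝ} (hM : ∀ θ, ‖g θ‖ ≤ M) :
    HasSum (fun k : ℤ => f k * ∫ θ in Set.Ioc (0 : ℝ) 1, g θ * e2pi (-((k : ℝ) * θ)))
      (∫ θ in Set.Ioc (0 : ℝ) 1, g θ * ∑' k : ℤ, f k * e2pi (-((k : ℝ) * θ))) := by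
  have h := hasSum_integral_of_summable_integral_norm
    (μ := volume.restrict (Set.Ioc (0 : ℝ) 1))
    (F := fun (k : ℤ) θ => g θ * (f k * e2pi (-((k : ℝ) * θ))))
    (fun k => (Continuous.integrableOn_Icc (by fun_prop)).mono_set Set.Ioc_subset_Icc_self)
    (by
      refine Summable.of_nonneg_of_le (fun k => integral_nonneg fun _ => norm_nonneg _)
        (fun k => ?_) (hf.mul_left M)
      refine (integral_mono_of_nonneg (.of_forall fun _ => norm_nonneg _)
        (integrable_const (M * ‖f k‖)) (.of_forall fun θ => ?_)).trans_eq (by simp)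
      simp only [norm_mul, norm_e2pi, mul_one]
      exact mul_le_mul_of_nonneg_right (hM θ) (norm_nonneg _))
  simp_rw [tsum_mul_left] at h
  have e : ∀ k : ℤ, f k * ∫ θ in Set.Ioc (0 : ℝ) 1, g θ * e2pi (-((k : ℝ) * θ)) =
      ∫ θ in Set.Ioc (0 : ℝ) 1, g θ * (f k * e2pi (-((k : ℝ) * θ))) := by
    intro k
    rw [← integral_const_mul]
    refine integral_congr_ae (.of_forall fun θ => ?_)
    ring
  simp_rw [e]
  exact h

/-- Parseval's identity for an absolutely convergent Fourier series. -/
lemma setIntegral_norm_tsum_e2pi_sq {f : ℤ → ℂ} (hf : Summable fun k => ‖f k‖) :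
    ∫ θ in Set.Ioc (0 : ℝ) 1, ‖∑' k : ℤ, f k * e2pi (-((k : ℝ) * θ))‖ ^ 2 =
      ∑' k, ‖f k‖ ^ 2 := by
  set F : ℝ → ℂ := fun θ => ∑' k : ℤ, f k * e2pi (-((k : ℝ) * θ)) with hF
  have hFc : Continuous F := continuous_tsum_mul_e2pi hf
  have hFb : ∀ θ, ‖F θ‖ ≤ ∑' k, ‖f k‖ := fun θ =>
    tsum_of_norm_bounded hf.hasSum fun k => by rw [norm_mul, norm_e2pi, mul_one]
  have hcoef : ∀ k : ℤ, ∫ θ in Set.Ioc (0 : ℝ) 1, conj (F θ) * e2pi (-((k : ℝ) * θ)) =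
      conj (f k) := by
    intro k
    have h := hasSum_setIntegral_mul_e2pi hf (g := fun θ => e2pi (k * θ)) (by fun_prop)
      (M := 1) fun θ => (norm_e2pi _).le
    have e : ∀ l : ℤ, f l * ∫ θ in Set.Ioc (0 : ℝ) 1, e2pi (k * θ) * e2pi (-((l : ℝ) * θ)) =
        if l = k then f k else 0 := by
      intro l
      have : ∀ θ : ℝ, e2pi (k * θ) * e2pi (-((l : ℝ) * θ)) = e2pi ((k - l : ℤ) * θ) := by
        intro θ; rw [← e2pi_add]; congr 1; push_cast; ring
      simp_rw [this, setIntegral_e2pi_intCast]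
      by_cases hl : l = k
      · simp [hl]
      · simp [hl, sub_eq_zero, Ne.symm hl]
    simp_rw [e] at h
    have h2 := h.unique (hasSum_ite_eq k (f k))
    rw [← h2, ← integral_conj]
    refine integral_congr_ae (.of_forall fun θ => ?_)
    simp only [map_mul, conj_e2pi, hF]
    ring
  have h := hasSum_setIntegral_mul_e2pi hf (g := fun θ => conj (F θ))
    (Complex.continuous_conj.comp hFc) (M := ∑' k, ‖f k‖) fun θ => by
      rw [RCLike.norm_conj]; exact hFb θ
  simp_rw [hcoef, Complex.mul_conj'] at h
  have e : ∫ θ in Set.Ioc (0 : ℝ) 1, conj (F θ) * F θ =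
      ((∫ θ in Set.Ioc (0 : ℝ) 1, ‖F θ‖ ^ 2 : ℝ) : ℂ) := by
    rw [← integral_complex_ofReal]
    refine integral_congr_ae (.of_forall fun θ => ?_)
    simp only [Complex.conj_mul']
    push_cast
    rfl
  rw [e] at h
  have h' : HasSum (fun k => ‖f k‖ ^ 2) (∫ θ in Set.Ioc (0 : ℝ) 1, ‖F θ‖ ^ 2) := by
    rw [← Complex.hasSum_ofReal]
    simpa using h
  exact h'.tsum_eq.symm

end Auxiliary

theorem multifrequency_maximal (χ : ℝ → ℂ) (hχs : ContDiff ℝ (⊤ : ℕ∞) χ)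
    (hχ0 : ∀ x : ℝ, x ∉ Set.Icc (-(1/4) : ℝ) (1/4) → χ x = 0) :
    ∃ C : ℝ, 0 < C ∧
      ∀ J d D : ℕ, 1 ≤ J → 1 ≤ d → 1 ≤ D → D < 2 ^ d →
        ∀ num : Fin J → ℕ, Function.Injective num → (∀ j, num j < D) →
          ∀ f : ℤ → ℂ, Summable (fun k : ℤ => ‖f k‖) →
            (∑' x : ℤ,
                (⨆ (n : ℕ) (_ : 2 * d < n),
                  (‖∑ j : Fin J,
                      ∫ θ in (0:ℝ)..1,
                        χ ((2 : ℝ) ^ n * (θ - (num j : ℝ) / (D : ℝ))) *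
                          (∑' k : ℤ, f k * e2pi (-((k : ℝ) * θ))) *
                          e2pi ((x : ℝ) * θ)‖₊ : ℝ≥0∞)) ^ (2:ℝ)) ^ ((1:ℝ)/2) ≤
              ENNReal.ofReal C *
                (∑' k : ℤ, (‖f k‖₊ : ℝ≥0∞) ^ (2:ℝ)) ^ ((1:ℝ)/2) := by
  obtain ⟨A, hA0, hA⟩ := exists_correlation_bound hχs hχ0
  refine ⟨Real.sqrt (128 * A), Real.sqrt_pos.2 (by positivity), ?_⟩
  intro J d D _ _ hD hDd num hinj hnum f hf
  set F : ℝ → ℂ := fun θ => ∑' k : ℤ, f k * e2pi (-((k : ℝ) * θ)) with hF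
  have hFc : Continuous F := continuous_tsum_mul_e2pi hf
  have hF1 : MeasureTheory.MemLp ((Set.Ioc (0 : ℝ) 1).indicator F) 2 MeasureTheory.volume :=
    (MeasureTheory.memLp_indicator_iff_restrict measurableSet_Ioc).2
      (MeasureTheory.MemLp.of_bound hFc.aestronglyMeasurable (∑' k, ‖f k‖) (.of_forall fun θ =>
        tsum_of_norm_bounded hf.hasSum fun k => by rw [norm_mul, norm_e2pi, mul_one]))
  have hnsq : ∀ z : ℂ, (‖z‖₊ : ℝ≥0∞) ^ (2 : ℝ) = ENNReal.ofReal (‖z‖ ^ 2) := fun z => by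
    rw [ENNReal.rpow_ofNat, ENNReal.ofReal_pow (norm_nonneg _), ofReal_norm]; rfl
  have hf2 : Summable fun k => ‖f k‖ ^ 2 := by
    refine hf.of_norm_bounded_eventually ?_
    filter_upwards [hf.tendsto_cofinite_zero.eventually (gt_mem_nhds zero_lt_one)] with k hk
    rw [Real.norm_of_nonneg (by positivity), sq]
    exact mul_le_of_le_one_left (norm_nonneg _) hk.le
  have hpars : ∫ θ, ‖(Set.Ioc (0 : ℝ) 1).indicator F θ‖ ^ 2 = ∑' k, ‖f k‖ ^ 2 := by
    rw [← setIntegral_norm_tsum_e2pi_sq hf, ← MeasureTheory.integral_indicator measurableSet_Ioc]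
    congr 1; ext θ
    by_cases hθ : θ ∈ Set.Ioc (0 : ℝ) 1
    · simp only [Set.indicator_of_mem hθ, hF]
    · simp only [Set.indicator_of_notMem hθ]; simp
  have main : (∑' x : ℤ, (⨆ (n : ℕ) (_ : 2 * d < n),
      (‖∑ j : Fin J, ∫ θ in (0:ℝ)..1, χ ((2 : ℝ) ^ n * (θ - (num j : ℝ) / (D : ℝ))) * F θ *
        e2pi ((x : ℝ) * θ)‖₊ : ℝ≥0∞)) ^ (2:ℝ)) ≤
      ENNReal.ofReal (128 * A) * ∑' k : ℤ, (‖f k‖₊ : ℝ≥0∞) ^ (2:ℝ) := by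
    rw [ENNReal.tsum_eq_iSup_sum]
    refine iSup_le fun X => ?_
    have : Nonempty {n : ℕ // 2 * d < n} := ⟨⟨2 * d + 1, by omega⟩⟩
    have hpow : ∀ a : {n : ℕ // 2 * d < n} → ℝ≥0∞, (⨆ i, a i) ^ (2 : ℝ) = ⨆ i, a i ^ (2 : ℝ) :=
      fun a => (ENNReal.orderIsoRpow 2 two_pos).map_iSup a
    simp_rw [iSup_subtype', hpow]
    refine sum_iSup_le_of_forall_selection X _ fun s => ?_
    simp_rw [hnsq]
    rw [← ENNReal.ofReal_sum_of_nonneg fun _ _ => sq_nonneg _,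
      ← ENNReal.ofReal_tsum_of_nonneg (fun _ => sq_nonneg _) hf2,
      ← ENNReal.ofReal_mul (by positivity), ← hpars]
    apply ENNReal.ofReal_le_ofReal
    refine le_trans (le_of_eq ?_) (sum_norm_multifrequency_sq_le hχs.continuous hχ0 hA0 hA hD num
      hinj hnum X (fun x => 2 ^ (s x : ℕ)) (fun x => ?_) hF1)
    · refine Finset.sum_congr rfl fun x _ => ?_
      congr 2
      refine Finset.sum_congr rfl fun j _ => ?_
      rw [intervalIntegral.integral_of_le zero_le_one,
        ← MeasureTheory.integral_indicator measurableSet_Ioc]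
      congr 1; ext θ
      by_cases hθ : θ ∈ Set.Ioc (0 : ℝ) 1
      · simp only [Set.indicator_of_mem hθ]
      · simp only [Set.indicator_of_notMem hθ]; simp
    · have h1 : 2 ^ d ≤ 2 ^ (s x : ℕ) :=
        Nat.pow_le_pow_right two_pos (by have := (s x).2; omega)
      exact_mod_cast hDd.le.trans h1
  refine (ENNReal.rpow_le_rpow main (by norm_num)).trans_eq ?_
  rw [ENNReal.mul_rpow_of_nonneg _ _ (by norm_num),
    ENNReal.ofReal_rpow_of_nonneg (by positivity) (by norm_num), ← Real.sqrt_eq_rpow]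

end
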